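/- Let u^c < 0, let 𝒰 be an open complex neighborhood of u^c, let f, Q, U be analytic on 𝒰 with f real on 𝒰 ∩ ℝ, f(u^c) = 0 and f'(u^c) > 0, and let P^∞ be the outside parametrix with endpoint u^c. Define Δ^(1)(λ) = i Q(λ)(−f(λ))^{−1/2} P^∞(λ) σ₃ P^∞(λ)^{−1}, Δ^(2)(λ) = −(1/2)(−f(λ))^{−1} P^∞(λ) [[Q(λ)², U(λ)], [U(λ), Q(λ)²]] P^∞(λ)^{−1}, and R^(1)(λ) = (λ − u^c)^{−1}·Res(Δ^(1); u^c) − Δ^(1)(λ). Then P^∞(λ) σ₁ P^∞(λ)^{−1} = σ₃, the function R^(1) Δ^(1) + Δ^(2) extends meromorphically to a neighborhood of u^c with at most a simple pole at u^c, and Res(R^(1)Δ^(1) + Δ^(2); u^c) = ((U(u^c) + Q(u^c)²)/(2 f'(u^c))) σ₃. -/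

import Mathlib

open Filter Topology Set Matrix

/-- The outside parametrix with endpoint `u^c`, principal branches. -/
noncomputable def Pinf (uc : ℝ) (lam : ℂ) : Matrix (Fin 2) (Fin 2) ℂ :=
  ((-lam) ^ ((1 : ℂ) / 4)) •
    (Matrix.of ![![((uc : ℂ) - lam) ^ (-(1 / 4) : ℂ), 0],
                 ![0, ((uc : ℂ) - lam) ^ ((1 : ℂ) / 4)]] *
     Matrix.of ![![1, 1], ![Complex.I, -Complex.I]])

/-- The Pauli matrix `σ₁`. -/
def sigma1 : Matrix (Fin 2) (Fin 2) ℂ := Matrix.of ![![0, 1], ![1, 0]]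

/-- The Pauli matrix `σ₃`. -/
def sigma3 : Matrix (Fin 2) (Fin 2) ℂ := Matrix.of ![![1, 0], ![0, -1]]

/-- The elementary matrix `E₁₂`. -/
def E12 : Matrix (Fin 2) (Fin 2) ℂ := Matrix.of ![![0, 1], ![0, 0]]

/-- `Δ^{(1)}(λ) = i Q(λ)(−f(λ))^{−1/2} P^∞(λ) σ₃ P^∞(λ)⁻¹`. -/
noncomputable def Delta1 (uc : ℝ) (f Q : ℂ → ℂ) (lam : ℂ) : Matrix (Fin 2) (Fin 2) ℂ :=
  (Complex.I * Q lam * (-(f lam)) ^ (-(1 / 2) : ℂ)) •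
    (Pinf uc lam * sigma3 * (Pinf uc lam)⁻¹)

/-- `Δ^{(2)}(λ) = −(1/2)(−f(λ))^{−1} P^∞(λ) [[Q², U],[U, Q²]] P^∞(λ)⁻¹`. -/
noncomputable def Delta2 (uc : ℝ) (f Q U : ℂ → ℂ) (lam : ℂ) : Matrix (Fin 2) (Fin 2) ℂ :=
  (-(1 / 2 : ℂ) * (-(f lam))⁻¹) •
    (Pinf uc lam * Matrix.of ![![Q lam ^ 2, U lam], ![U lam, Q lam ^ 2]] *
      (Pinf uc lam)⁻¹)

/-- `R^{(1)}(λ) = (λ − u^c)⁻¹ Res(Δ^{(1)}; u^c) − Δ^{(1)}(λ)`, where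
`Res(Δ^{(1)}; u^c) = −Q(u^c) f'(u^c)^{−1/2} E₁₂`. -/
noncomputable def R1 (uc : ℝ) (f Q : ℂ → ℂ) (lam : ℂ) : Matrix (Fin 2) (Fin 2) ℂ :=
  (lam - (uc : ℂ))⁻¹ • ((-(Q (uc : ℂ)) * (deriv f (uc : ℂ)) ^ (-(1 / 2) : ℂ)) • E12)
    - Delta1 uc f Q lam

/-! Near `u^c` write `f = (λ − u^c) g` with `g(u^c) = f'(u^c) > 0`. Since `f` is real on the real
axis, `−f` and `u^c − λ` lie on the same side of it, so the principal branches satisfy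
`(−f)^s = (u^c − λ)^s g^s` and the branch cuts of `P^∞` and of `(−f)^{−1/2}` cancel in `Δ^(1)`,
which is meromorphic. The conjugations by `P^∞` give `(Δ^(1))² = Q² / f` and
`Δ^(2) = (Q² + U σ₃) / (2f)`, so that `R^(1) Δ^(1) + Δ^(2)` has a pole of order at most one. In the
term `Res(Δ^(1); u^c) Δ^(1) / (λ − u^c)` the pole of `Δ^(1)` is killed because `E₁₂² = 0`. -/

section Branches

open Complex

lemma ofReal_sub_mem_slitPlane_iff {x : ℝ} {z : ℂ} :
    (x : ℂ) - z ∈ slitPlane ↔ z.im ≠ 0 ∨ z.re < x := by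
  simp [mem_slitPlane_iff, or_comm]

lemma ne_zero_of_ofReal_sub_mem_slitPlane {x : ℝ} {z : ℂ} (hx : x < 0)
    (hz : (x : ℂ) - z ∈ slitPlane) : z ≠ 0 := by
  rintro rfl
  simp [hx.not_gt] at hz

lemma div_cpow_of_im_nonneg_iff {z w : ℂ} (hw : w ∈ slitPlane) (h : 0 ≤ z.im ↔ 0 ≤ w.im) (s : ℂ) :
    (z / w) ^ s = z ^ s / w ^ s := by
  rcases eq_or_ne z 0 with rfl | hz
  · rcases eq_or_ne s 0 with rfl | hs <;> simp [*]
  have hw0 : w ≠ 0 := slitPlane_ne_zero hw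
  have hwpi : arg w ≠ Real.pi := slitPlane_arg_ne_pi hw
  have harg : arg z + arg w⁻¹ ∈ Ioc (-Real.pi) Real.pi := by
    rw [arg_inv, if_neg hwpi]
    have hwlt : arg w < Real.pi := lt_of_le_of_ne (arg_le_pi w) hwpi
    rw [← arg_nonneg_iff, ← arg_nonneg_iff] at h
    have := neg_pi_lt_arg z
    have := neg_pi_lt_arg w
    have := arg_le_pi z
    by_cases hz0 : 0 ≤ arg z
    · have := h.1 hz0
      constructor <;> linarith
    · have := mt h.2 hz0
      constructor <;> linarith
  rw [div_eq_mul_inv, div_eq_mul_inv, ← inv_cpow _ _ hwpi,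
    cpow_def_of_ne_zero (mul_ne_zero hz (inv_ne_zero hw0)), cpow_def_of_ne_zero hz,
    cpow_def_of_ne_zero (inv_ne_zero hw0), log_mul hz (inv_ne_zero hw0) harg, add_mul, exp_add]

lemma eventually_sign_im_eq {f : ℂ → ℂ} {f' : ℂ} {x₀ : ℝ} (hf : HasStrictDerivAt f f' x₀)
    (hreal : ∀ᶠ x : ℝ in 𝓝 x₀, (f x).im = 0) (hf' : 0 < f'.re) :
    ∀ᶠ z in 𝓝 (x₀ : ℂ), SignType.sign (f z).im = SignType.sign z.im := by
  have hre : Tendsto re (𝓝 (x₀ : ℂ)) (𝓝 x₀) := continuous_re.tendsto _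
  have hproj : Tendsto (fun z : ℂ => (z, (z.re : ℂ))) (𝓝 (x₀ : ℂ)) (𝓝 ((x₀ : ℂ), (x₀ : ℂ))) :=
    Continuous.tendsto' (by fun_prop) _ _ (by simp)
  filter_upwards [hproj.eventually (hf.hasStrictFDerivAt.isLittleO.def (half_pos hf')),
    hre.eventually hreal] with z hz hzre
  have hsub : z - z.re = z.im * I := by
    linear_combination -(re_add_im z)
  -- Strict differentiability between `z` and `z.re`; `f z.re` does not contribute, being real.
  have him : |(f z).im - f'.re * z.im| ≤ f'.re / 2 * |z.im| := by
    simpa [hsub, hzre, mul_comm] using (abs_im_le_norm _).trans hz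
  rw [abs_le] at him
  rcases lt_trichotomy z.im 0 with hneg | hzero | hpos
  · rw [abs_of_neg hneg] at him
    rw [sign_neg hneg, sign_neg (by nlinarith)]
  · simp only [hzero, abs_zero, mul_zero, neg_zero, sub_zero] at him
    rw [hzero, le_antisymm him.2 him.1]
  · rw [abs_of_pos hpos] at him
    rw [sign_pos hpos, sign_pos (by nlinarith)]

lemma eventually_neg_cpow_eq_mul_dslope_cpow {f : ℂ → ℂ} {f' : ℂ} {x₀ : ℝ}
    (hf : HasStrictDerivAt f f' x₀) (hf0 : f x₀ = 0)
    (hreal : ∀ᶠ x : ℝ in 𝓝 x₀, (f x).im = 0) (hf' : 0 < f'.re) :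
    ∀ᶠ z in 𝓝 (x₀ : ℂ), (x₀ : ℂ) - z ∈ slitPlane →
      ∀ s : ℂ, (-f z) ^ s = (x₀ - z) ^ s * dslope f x₀ z ^ s := by
  filter_upwards [eventually_sign_im_eq hf hreal hf'] with z hsign hz s
  have hz0 : (x₀ : ℂ) - z ≠ 0 := slitPlane_ne_zero hz
  have hdslope : dslope f x₀ z = -f z / (x₀ - z) := by
    rw [dslope_of_ne _ (sub_ne_zero.1 hz0).symm, slope_def_field, hf0, sub_zero, ← neg_sub z,
      neg_div_neg_eq]
  have him : 0 ≤ (-f z).im ↔ 0 ≤ (x₀ - z).im := by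
    rw [neg_im, sub_im, ofReal_im, zero_sub, neg_nonneg, neg_nonneg, ← sign_nonpos_iff, hsign,
      sign_nonpos_iff]
  have hpow : ((x₀ : ℂ) - z) ^ s ≠ 0 := by
    simp [cpow_eq_zero_iff, hz0]
  rw [hdslope, div_cpow_of_im_nonneg_iff hz him, mul_div_cancel₀ _ hpow]

lemma eventually_dslope_mem_slitPlane {f : ℂ → ℂ} {f' c : ℂ} (hf : HasDerivAt f f' c)
    (hf' : 0 < f'.re) : ∀ᶠ z in 𝓝 c, dslope f c z ∈ slitPlane := by
  have hmem : dslope f c c ∈ slitPlane := by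
    rw [dslope_same, hf.deriv]
    exact Or.inl hf'
  exact (continuousAt_dslope_same.2 hf.differentiableAt).eventually_mem
    (isOpen_slitPlane.mem_nhds hmem)

lemma cpow_neg_half_sq (z : ℂ) : (z ^ (-(1 / 2) : ℂ)) ^ 2 = z⁻¹ := by
  rw [← cpow_nat_mul, ← cpow_neg_one]
  norm_num

end Branches

section SimplePole

variable {V : Set ℂ} {c : ℂ}

lemma analyticOnNhd_dslope {E : Type*} [NormedAddCommGroup E] [NormedSpace ℂ E] [CompleteSpace E]
    {F : ℂ → E} (hV : IsOpen V) (hc : c ∈ V) (hF : AnalyticOnNhd ℂ F V) :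
    AnalyticOnNhd ℂ (dslope F c) V :=
  ((Complex.differentiableOn_dslope (hV.mem_nhds hc)).2 hF.differentiableOn).analyticOnNhd hV

lemma exists_analyticOnNhd_inv_sub_smul_eq {m n : Type*} {G : ℂ → Matrix m n ℂ} (hV : IsOpen V)
    (hc : c ∈ V) (hG : ∀ i j, AnalyticOnNhd ℂ (fun z => G z i j) V) :
    ∃ H : ℂ → Matrix m n ℂ, (∀ i j, AnalyticOnNhd ℂ (fun z => H z i j) V) ∧
      ∀ z ≠ c, (z - c)⁻¹ • G z = (z - c)⁻¹ • G c + H z := by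
  refine ⟨fun z => Matrix.of fun i j => dslope (fun w => G w i j) c z,
    fun i j => analyticOnNhd_dslope hV hc (hG i j), fun z hz => ?_⟩
  ext i j
  simp only [Matrix.add_apply, Matrix.smul_apply, Matrix.of_apply, dslope_of_ne _ hz,
    slope_def_module, smul_eq_mul]
  ring

end SimplePole

section Parametrix

variable {uc : ℝ} {lam : ℂ}

lemma det_Pinf (hu : (uc : ℂ) - lam ≠ 0) :
    (Pinf uc lam).det = -2 * Complex.I * (-lam) ^ ((1 : ℂ) / 2) := by
  have hroots : ((uc : ℂ) - lam) ^ (-(1 / 4) : ℂ) * ((uc : ℂ) - lam) ^ ((1 : ℂ) / 4) = 1 := by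
    rw [← Complex.cpow_add _ _ hu]
    norm_num
  have hsq : ((-lam) ^ ((1 : ℂ) / 4)) ^ 2 = (-lam) ^ ((1 : ℂ) / 2) := by
    rw [← Complex.cpow_nat_mul]
    norm_num
  rw [Pinf, Matrix.det_smul, Matrix.det_mul, Matrix.det_fin_two_of, Matrix.det_fin_two_of,
    Fintype.card_fin, hsq, hroots]
  ring

lemma isUnit_det_Pinf (h0 : lam ≠ 0) (hu : (uc : ℂ) - lam ≠ 0) : IsUnit (Pinf uc lam).det := by
  simp [det_Pinf hu, Complex.cpow_eq_zero_iff, h0]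

lemma Pinf_mul_sigma1 : Pinf uc lam * sigma1 = sigma3 * Pinf uc lam := by
  ext i j
  fin_cases i <;> fin_cases j <;> simp [Pinf, sigma1, sigma3, Matrix.mul_apply]

lemma Pinf_mul_sigma3 (hu : (uc : ℂ) - lam ≠ 0) :
    Pinf uc lam * sigma3 =
      !![0, -Complex.I * ((uc : ℂ) - lam) ^ (-(1 / 2) : ℂ);
        Complex.I * ((uc : ℂ) - lam) ^ ((1 : ℂ) / 2), 0] * Pinf uc lam := by
  have hquarter : ((uc : ℂ) - lam) ^ (-(1 / 4) : ℂ) =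
      ((uc : ℂ) - lam) ^ (-(1 / 2) : ℂ) * ((uc : ℂ) - lam) ^ ((1 : ℂ) / 4) := by
    rw [← Complex.cpow_add _ _ hu]
    norm_num
  have hhalf : ((uc : ℂ) - lam) ^ ((1 : ℂ) / 2) * ((uc : ℂ) - lam) ^ (-(1 / 2) : ℂ) = 1 := by
    rw [← Complex.cpow_add _ _ hu]
    norm_num
  rw [Pinf, hquarter, Matrix.mul_smul, Matrix.smul_mul]
  congr 1
  ext i j
  fin_cases i <;> fin_cases j <;> simp [sigma3, Matrix.mul_apply] <;>
    grind [Complex.I_mul_I]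

lemma Pinf_conj_sigma1 (h0 : lam ≠ 0) (hu : (uc : ℂ) - lam ≠ 0) :
    Pinf uc lam * sigma1 * (Pinf uc lam)⁻¹ = sigma3 := by
  rw [Pinf_mul_sigma1, Matrix.mul_nonsing_inv_cancel_right _ _ (isUnit_det_Pinf h0 hu)]

lemma Pinf_conj_sigma3 (h0 : lam ≠ 0) (hu : (uc : ℂ) - lam ≠ 0) :
    Pinf uc lam * sigma3 * (Pinf uc lam)⁻¹ =
      !![0, -Complex.I * ((uc : ℂ) - lam) ^ (-(1 / 2) : ℂ);
        Complex.I * ((uc : ℂ) - lam) ^ ((1 : ℂ) / 2), 0] := by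
  rw [Pinf_mul_sigma3 hu, Matrix.mul_nonsing_inv_cancel_right _ _ (isUnit_det_Pinf h0 hu)]

end Parametrix

section Residue

variable {uc : ℝ} {lam : ℂ} {f g Q U : ℂ → ℂ}

lemma Delta1_eq (h0 : lam ≠ 0) (hu : (uc : ℂ) - lam ≠ 0)
    (hcpow : ∀ s : ℂ, (-f lam) ^ s = (uc - lam) ^ s * g lam ^ s) :
    Delta1 uc f Q lam =
      -(Q lam * g lam ^ (-(1 / 2) : ℂ)) • !![0, (lam - uc)⁻¹; 1, 0] := by
  have hsq : (uc - lam) ^ (-(1 / 2) : ℂ) * (uc - lam) ^ (-(1 / 2) : ℂ) = -(lam - uc)⁻¹ := by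
    rw [← sq, cpow_neg_half_sq, ← inv_neg, neg_sub]
  have hhalf : (uc - lam) ^ (-(1 / 2) : ℂ) * (uc - lam) ^ ((1 : ℂ) / 2) = 1 := by
    rw [← Complex.cpow_add _ _ hu]
    norm_num
  rw [Delta1, Pinf_conj_sigma3 h0 hu, hcpow]
  ext i j
  fin_cases i <;> fin_cases j <;> simp <;> grind [Complex.I_mul_I]

lemma Delta1_mul_self (h0 : lam ≠ 0) (hu : (uc : ℂ) - lam ≠ 0) :
    Delta1 uc f Q lam * Delta1 uc f Q lam = (Q lam ^ 2 * (f lam)⁻¹) • 1 := by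
  have hsigma3 : sigma3 * sigma3 = 1 := by
    simp [sigma3, Matrix.one_fin_two]
  have hconj : Pinf uc lam * sigma3 * (Pinf uc lam)⁻¹ * (Pinf uc lam * sigma3 * (Pinf uc lam)⁻¹) =
      1 := by
    have hP := isUnit_det_Pinf h0 hu
    rw [← Matrix.mul_assoc, ← Matrix.mul_assoc, Matrix.nonsing_inv_mul_cancel_right _ _ hP,
      Matrix.mul_assoc _ sigma3 sigma3, hsigma3, Matrix.mul_one, Matrix.mul_nonsing_inv _ hP]
  rw [Delta1, smul_mul_smul_comm, hconj, ← sq, mul_pow, mul_pow, cpow_neg_half_sq, Complex.I_sq,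
    inv_neg]
  ring_nf

lemma Delta2_eq (h0 : lam ≠ 0) (hu : (uc : ℂ) - lam ≠ 0) :
    Delta2 uc f Q U lam = (2 * f lam)⁻¹ • (Q lam ^ 2 • 1 + U lam • sigma3) := by
  have hmatrix : Matrix.of ![![Q lam ^ 2, U lam], ![U lam, Q lam ^ 2]] =
      Q lam ^ 2 • 1 + U lam • sigma1 := by
    simp [sigma1, Matrix.one_fin_two]
  have hscalar : -(1 / 2 : ℂ) * (-f lam)⁻¹ = (2 * f lam)⁻¹ := by
    rw [inv_neg, mul_inv]
    ring
  rw [Delta2, hmatrix, hscalar, Matrix.mul_add, Matrix.add_mul, Matrix.mul_smul, Matrix.smul_mul,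
    Matrix.mul_one, Matrix.mul_nonsing_inv _ (isUnit_det_Pinf h0 hu), Matrix.mul_smul,
    Matrix.smul_mul, Pinf_conj_sigma1 h0 hu]

/-- The function `(λ − u^c)(R^{(1)}Δ^{(1)} + Δ^{(2)})`, whose value at `u^c` is the residue. It is
written in terms of `g = f / (λ − u^c)` so that it is analytic at `u^c` as well. -/
noncomputable def poleNumerator (uc : ℝ) (g Q U : ℂ → ℂ) (lam : ℂ) : Matrix (Fin 2) (Fin 2) ℂ :=
  !![Q uc * g uc ^ (-(1 / 2) : ℂ) * (Q lam * g lam ^ (-(1 / 2) : ℂ))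
      + (U lam - Q lam ^ 2) / (2 * g lam), 0;
    0, -(U lam + Q lam ^ 2) / (2 * g lam)]

lemma R1_mul_Delta1_add_Delta2_eq (h0 : lam ≠ 0) (hu : (uc : ℂ) - lam ≠ 0)
    (hfg : f lam = (lam - uc) * g lam) (hguc : g uc = deriv f uc)
    (hcpow : ∀ s : ℂ, (-f lam) ^ s = (uc - lam) ^ s * g lam ^ s) :
    R1 uc f Q lam * Delta1 uc f Q lam + Delta2 uc f Q U lam =
      (lam - uc)⁻¹ • poleNumerator uc g Q U lam := by
  have hE12 : E12 * Delta1 uc f Q lam = -(Q lam * g lam ^ (-(1 / 2) : ℂ)) • !![1, 0; 0, 0] := by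
    ext i j
    fin_cases i <;> fin_cases j <;> simp [Delta1_eq h0 hu hcpow, E12]
  rw [R1, sub_mul, smul_mul_assoc, smul_mul_assoc, hE12, Delta1_mul_self h0 hu, Delta2_eq h0 hu,
    hfg, ← hguc]
  ext i j
  fin_cases i <;> fin_cases j <;> simp [poleNumerator, sigma3] <;> ring

lemma poleNumerator_self :
    poleNumerator uc g Q U uc = ((U uc + Q uc ^ 2) / (2 * g uc)) • sigma3 := by
  have hsq : Q uc * g uc ^ (-(1 / 2) : ℂ) * (Q uc * g uc ^ (-(1 / 2) : ℂ)) =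
      Q uc ^ 2 * (g uc)⁻¹ := by
    rw [← cpow_neg_half_sq]
    ring
  rw [poleNumerator, hsq]
  ext i j
  fin_cases i <;> fin_cases j <;> simp [sigma3] <;> ring

lemma analyticOnNhd_poleNumerator {V : Set ℂ} (hg : AnalyticOnNhd ℂ g V)
    (hQ : AnalyticOnNhd ℂ Q V) (hU : AnalyticOnNhd ℂ U V)
    (hslit : ∀ z ∈ V, g z ∈ Complex.slitPlane) (i j : Fin 2) :
    AnalyticOnNhd ℂ (fun z => poleNumerator uc g Q U z i j) V := by
  intro z hz
  have hgz : AnalyticAt ℂ g z := hg z hz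
  have hQz : AnalyticAt ℂ Q z := hQ z hz
  have hUz : AnalyticAt ℂ U z := hU z hz
  have hgslit : g z ∈ Complex.slitPlane := hslit z hz
  have h2g : 2 * g z ≠ 0 := mul_ne_zero two_ne_zero (Complex.slitPlane_ne_zero hgslit)
  fin_cases i <;> fin_cases j <;> dsimp [poleNumerator] <;>
    fun_prop (disch := assumption)

end Residue

/-- `P^∞ σ₁ (P^∞)⁻¹ = σ₃`, and `R^{(1)}Δ^{(1)} + Δ^{(2)}` extends
meromorphically near `u^c` with at most a simple pole there, with residue
`((U(u^c) + Q(u^c)²)/(2 f'(u^c))) σ₃`. -/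
theorem R1Delta1_plus_Delta2_residue
    (uc : ℝ) (huc : uc < 0)
    (𝒰 : Set ℂ) (hUopen : IsOpen 𝒰) (hUmem : (uc : ℂ) ∈ 𝒰)
    (f Q U : ℂ → ℂ)
    (hf : AnalyticOnNhd ℂ f 𝒰) (hQ : AnalyticOnNhd ℂ Q 𝒰) (hU : AnalyticOnNhd ℂ U 𝒰)
    (hfreal : ∀ x : ℝ, (x : ℂ) ∈ 𝒰 → (f (x : ℂ)).im = 0)
    (hf0 : f (uc : ℂ) = 0)
    (hf'im : (deriv f (uc : ℂ)).im = 0) (hf'pos : 0 < (deriv f (uc : ℂ)).re) :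
    (∀ lam : ℂ, (lam.im ≠ 0 ∨ lam.re < uc) →
      Pinf uc lam * sigma1 * (Pinf uc lam)⁻¹ = sigma3) ∧
    ∃ V : Set ℂ, IsOpen V ∧ (uc : ℂ) ∈ V ∧ V ⊆ 𝒰 ∧
      ∃ H : ℂ → Matrix (Fin 2) (Fin 2) ℂ,
        (∀ i j : Fin 2, AnalyticOnNhd ℂ (fun lam => H lam i j) V) ∧
        ∀ lam ∈ V, (lam.im ≠ 0 ∨ lam.re < uc) → lam ≠ (uc : ℂ) →
          R1 uc f Q lam * Delta1 uc f Q lam + Delta2 uc f Q U lam =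
            (lam - (uc : ℂ))⁻¹ •
              (((U (uc : ℂ) + Q (uc : ℂ) ^ 2) / (2 * deriv f (uc : ℂ))) • sigma3)
            + H lam := by
  simp only [← ofReal_sub_mem_slitPlane_iff]
  have hne {lam : ℂ} (h : (uc : ℂ) - lam ∈ Complex.slitPlane) : lam ≠ 0 ∧ (uc : ℂ) - lam ≠ 0 :=
    ⟨ne_zero_of_ofReal_sub_mem_slitPlane huc h, Complex.slitPlane_ne_zero h⟩
  refine ⟨fun lam h => Pinf_conj_sigma1 (hne h).1 (hne h).2, ?_⟩
  have hstrict := (hf _ hUmem).hasStrictDerivAt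
  have h𝒰 := hUopen.mem_nhds hUmem
  have hreal : ∀ᶠ x : ℝ in 𝓝 uc, (f x).im = 0 :=
    (Complex.continuous_ofReal.continuousAt.eventually h𝒰).mono hfreal
  have hguc : dslope f uc uc = deriv f uc := dslope_same f _
  have hfg (lam : ℂ) : f lam = (lam - uc) * dslope f uc lam := by
    simpa [hf0] using (sub_smul_dslope f (uc : ℂ) lam).symm
  have hslit := eventually_dslope_mem_slitPlane hstrict.hasDerivAt hf'pos
  have hcpow := eventually_neg_cpow_eq_mul_dslope_cpow hstrict hf0 hreal hf'pos
  obtain ⟨V, hV, hVopen, hVmem⟩ := eventually_nhds_iff.1 (hslit.and (hcpow.and h𝒰))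
  have hV𝒰 : V ⊆ 𝒰 := fun z hz => (hV z hz).2.2
  have hg := (analyticOnNhd_dslope hUopen hUmem hf).mono hV𝒰
  obtain ⟨H, hH, hHeq⟩ := exists_analyticOnNhd_inv_sub_smul_eq hVopen hVmem
    (analyticOnNhd_poleNumerator (uc := uc) hg (hQ.mono hV𝒰) (hU.mono hV𝒰)
      fun z hz => (hV z hz).1)
  refine ⟨V, hVopen, hVmem, hV𝒰, H, hH, fun lam hlam h hu => ?_⟩
  rw [R1_mul_Delta1_add_Delta2_eq (hne h).1 (hne h).2 (hfg lam) hguc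
    ((hV lam hlam).2.1 h), hHeq lam hu, poleNumerator_self, hguc]
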